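/- Let R > 0, R_μ > 0, L > 0 and ε ∈ (0,1), and let (f_ε, g_ε) be a nonnegative classical solution of the regularized thin-film Muskat system on (−L,L) with f_ε ≥ ε and g_ε ≥ ε on (0,∞)×(−L,L). Then for every T > 0: H(f_ε(T), g_ε(T)) + ∫₀^T∫_{−L}^{L} [(1/2)|∂ₓf_ε|² + (R/(1+2R))|∂ₓg_ε|²] dx dt ≤ H(f_ε(0), g_ε(0)), where H(f,g) := ∫_{−L}^{L} (f ln f + (R/R_μ) g ln g) dx. -/

import Mathlib

open MeasureTheory Set

noncomputable section

/-- Derivative within the interval `[-L, L]`. -/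
def derivI (L : ℝ) (u : ℝ → ℝ) (x : ℝ) : ℝ :=
  derivWithin u (Icc (-L) L) x

/-- `F = R_ε[u]`: `F ∈ H²((-L,L))` (here: `C²` on `[-L,L]`) solves
`F - ε² ∂ₓ²F = u` on `[-L,L]` with Neumann boundary conditions `∂ₓF(±L) = 0`. -/
structure IsResolvent (L ε : ℝ) (u F : ℝ → ℝ) : Prop where
  reg : ContDiffOn ℝ 2 F (Icc (-L) L)
  eqn : ∀ x ∈ Icc (-L) L, F x - ε ^ 2 * derivI L (derivI L F) x = u x
  bc_left : derivI L F (-L) = 0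
  bc_right : derivI L F L = 0

/-- A classical solution `(f, g)` of the regularized thin-film Muskat system (3.2a) on
`(-L, L)`, with `F = R_ε[f]` and `G = R_ε[g]`. -/
structure IsClassicalSolution (R Rμ L ε : ℝ) (f g F G : ℝ → ℝ → ℝ) : Prop where
  cont_f : ContinuousOn (Function.uncurry f) (Ici (0:ℝ) ×ˢ Icc (-L) L)
  cont_g : ContinuousOn (Function.uncurry g) (Ici (0:ℝ) ×ˢ Icc (-L) L)
  reg_f : ∀ t : ℝ, 0 < t → ContDiffOn ℝ 2 (f t) (Icc (-L) L)
  reg_g : ∀ t : ℝ, 0 < t → ContDiffOn ℝ 2 (g t) (Icc (-L) L)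
  res_f : ∀ t : ℝ, 0 < t → IsResolvent L ε (f t) (F t)
  res_g : ∀ t : ℝ, 0 < t → IsResolvent L ε (g t) (G t)
  bc_f : ∀ t : ℝ, 0 < t → derivI L (f t) (-L) = 0 ∧ derivI L (f t) L = 0
  bc_g : ∀ t : ℝ, 0 < t → derivI L (g t) (-L) = 0 ∧ derivI L (g t) L = 0
  pde_f : ∀ t : ℝ, 0 < t → ∀ x ∈ Ioo (-L) L,
    HasDerivAt (fun s => f s x)
      ((1 + R) * derivI L (fun y => f t y * derivI L (f t) y) x
        + R * derivI L (fun y => (f t y - ε) * derivI L (G t) y) x) t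
  pde_g : ∀ t : ℝ, 0 < t → ∀ x ∈ Ioo (-L) L,
    HasDerivAt (fun s => g s x)
      (Rμ * derivI L (fun y => (g t y - ε) * derivI L (F t) y) x
        + Rμ * derivI L (fun y => g t y * derivI L (g t) y) x) t

/-! ### Calculus of `derivI` -/

section DerivI

variable {L : ℝ} {u : ℝ → ℝ}

theorem derivI_eq_of_hasDerivAt {c x : ℝ} (hx : x ∈ Ioo (-L) L) (h : HasDerivAt u c x) :
    derivI L u x = c :=
  h.hasDerivWithinAt.derivWithin
    (uniqueDiffOn_Icc (hx.1.trans hx.2) x (Ioo_subset_Icc_self hx))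

theorem contDiffOn_derivI (hL : 0 < L) (hu : ContDiffOn ℝ 2 u (Icc (-L) L)) :
    ContDiffOn ℝ 1 (derivI L u) (Icc (-L) L) :=
  hu.derivWithin (uniqueDiffOn_Icc (by linarith)) (by norm_num)

theorem continuousOn_derivI (hL : 0 < L) (hu : ContDiffOn ℝ 1 u (Icc (-L) L)) :
    ContinuousOn (derivI L u) (Icc (-L) L) :=
  hu.continuousOn_derivWithin (uniqueDiffOn_Icc (by linarith)) le_rfl

theorem hasDerivWithinAt_derivI (hu : ContDiffOn ℝ 1 u (Icc (-L) L)) {x : ℝ}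
    (hx : x ∈ Icc (-L) L) : HasDerivWithinAt u (derivI L u x) (Icc (-L) L) x :=
  (hu.differentiableOn (by norm_num) x hx).hasDerivWithinAt

theorem hasDerivAt_derivI (hu : ContDiffOn ℝ 1 u (Icc (-L) L)) {x : ℝ}
    (hx : x ∈ Ioo (-L) L) : HasDerivAt u (derivI L u x) x :=
  (hasDerivWithinAt_derivI hu (Ioo_subset_Icc_self hx)).hasDerivAt (Icc_mem_nhds hx.1 hx.2)

/-- A function on an interval has nonnegative derivative at the right end if it is maximal
there. -/
theorem hasDerivWithinAt_nonneg_of_right_max {p : ℝ → ℝ} {a b c : ℝ} (hab : a < b)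
    (hp : HasDerivWithinAt p c (Icc a b) b) (hmax : ∀ y ∈ Icc a b, p y ≤ p b) : 0 ≤ c := by
  have hm : IsLocalMaxOn p (Icc a b) b :=
    Filter.eventually_of_mem self_mem_nhdsWithin hmax
  have hy : a - b ∈ posTangentConeAt (Icc a b) b := by
    apply mem_posTangentConeAt_of_segment_subset
    rw [add_sub_cancel, segment_symm, segment_eq_Icc hab.le]
  have := hm.hasFDerivWithinAt_nonpos hp.hasFDerivWithinAt hy
  simp at this
  nlinarith

/-- A function on an interval has nonpositive derivative at the left end if it is maximal
there. -/
theorem hasDerivWithinAt_nonpos_of_left_max {p : ℝ → ℝ} {a b c : ℝ} (hab : a < b)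
    (hp : HasDerivWithinAt p c (Icc a b) a) (hmax : ∀ y ∈ Icc a b, p y ≤ p a) : c ≤ 0 := by
  have hm : IsLocalMaxOn p (Icc a b) a :=
    Filter.eventually_of_mem self_mem_nhdsWithin hmax
  have hy : b - a ∈ posTangentConeAt (Icc a b) a := by
    apply mem_posTangentConeAt_of_segment_subset
    rw [add_sub_cancel, segment_eq_Icc hab.le]
  have := hm.hasFDerivWithinAt_nonpos hp.hasFDerivWithinAt hy
  simp at this
  nlinarith

/-- Second-order necessary condition at an interior maximum. -/
theorem second_deriv_nonpos_of_max {w w' : ℝ → ℝ} {a b x c : ℝ} (hx : x ∈ Ioo a b)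
    (hw : ∀ y ∈ Ioo a b, HasDerivAt w (w' y) y) (hw' : HasDerivAt w' c x)
    (hmax : ∀ y ∈ Ioo a b, w y ≤ w x) : w' x = 0 ∧ c ≤ 0 := by
  have h0 : w' x = 0 := by
    refine IsLocalMax.hasDerivAt_eq_zero ?_ (hw x hx)
    filter_upwards [Ioo_mem_nhds hx.1 hx.2] with y hy using hmax y hy
  refine ⟨h0, ?_⟩
  by_contra! hc
  have hs : ∀ᶠ y in nhdsWithin x (Ioi x), 0 < slope w' x y := by
    have h1 := hasDerivAt_iff_tendsto_slope.1 hw'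
    exact (h1.mono_left (nhdsWithin_mono _ fun y hy => ne_of_gt hy)).eventually_const_lt hc
  obtain ⟨r, hr, hpos⟩ := mem_nhdsGT_iff_exists_Ioo_subset.1 hs
  have hm : x < min r b := lt_min hr hx.2
  obtain ⟨y, hxy, hym⟩ := exists_between hm
  have hyb : y < b := hym.trans_le (min_le_right _ _)
  have hsub : Icc x y ⊆ Ioo a b := fun z hz => ⟨hx.1.trans_le hz.1, hz.2.trans_lt hyb⟩
  obtain ⟨z, hz, hzeq⟩ := exists_hasDerivAt_eq_slope w w' hxy
    (fun z hz => (hw z (hsub hz)).continuousAt.continuousWithinAt)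
    (fun z hz => hw z (hsub (Ioo_subset_Icc_self hz)))
  have h2 : 0 < slope w' x z :=
    hpos ⟨hz.1, hz.2.trans (hym.trans_le (min_le_left _ _))⟩
  rw [slope_def_field, h0, sub_zero] at h2
  have h3 : 0 < w' z := by
    have := mul_pos h2 (sub_pos.2 hz.1)
    rwa [div_mul_cancel₀ _ (sub_pos.2 hz.1).ne'] at this
  have h4 : w' z ≤ 0 := by
    rw [hzeq]
    exact div_nonpos_of_nonpos_of_nonneg (by linarith [hmax y (hsub ⟨hxy.le, le_rfl⟩)])
      (by linarith)
  linarith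

/-- A maximum point of `u - δ x²` is interior when `u` satisfies Neumann conditions. -/
theorem neumann_max_interior (hL : 0 < L) (hu : ContDiffOn ℝ 2 u (Icc (-L) L))
    (hl : derivI L u (-L) = 0) (hr : derivI L u L = 0) {δ x : ℝ} (hδ : 0 < δ)
    (hx : x ∈ Icc (-L) L) (hmax : ∀ y ∈ Icc (-L) L, u y - δ * y ^ 2 ≤ u x - δ * x ^ 2) :
    x ∈ Ioo (-L) L ∧ derivI L u x = 2 * δ * x ∧ derivI L (derivI L u) x ≤ 2 * δ := by
  have hu1 : ContDiffOn ℝ 1 u (Icc (-L) L) := hu.of_le (by norm_num)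
  have hsq : ∀ y : ℝ, HasDerivAt (fun y => δ * y ^ 2) (2 * δ * y) y := fun y =>
    ((hasDerivAt_pow 2 y).const_mul δ).congr_deriv (by norm_num; ring)
  have hd : ∀ y ∈ Icc (-L) L, HasDerivWithinAt (fun y => u y - δ * y ^ 2)
      (derivI L u y - 2 * δ * y) (Icc (-L) L) y := fun y hy =>
    (hasDerivWithinAt_derivI hu1 hy).sub (hsq y).hasDerivWithinAt
  have hxI : x ∈ Ioo (-L) L := by
    refine ⟨lt_of_le_of_ne hx.1 ?_, lt_of_le_of_ne hx.2 ?_⟩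
    · rintro rfl
      have := hasDerivWithinAt_nonpos_of_left_max (by linarith) (hd _ hx) hmax
      rw [hl] at this
      nlinarith
    · rintro rfl
      have := hasDerivWithinAt_nonneg_of_right_max (by linarith) (hd _ hx) hmax
      rw [hr] at this
      nlinarith
  have hlin : HasDerivAt (fun y => derivI L u y - 2 * δ * y)
      (derivI L (derivI L u) x - 2 * δ) x := by
    have := (hasDerivAt_derivI (contDiffOn_derivI hL hu) hxI).fun_sub
      ((hasDerivAt_id x).const_mul (2 * δ))
    simpa using this
  have h := second_deriv_nonpos_of_max hxI
    (fun y hy => (hd y (Ioo_subset_Icc_self hy)).hasDerivAt (Icc_mem_nhds hy.1 hy.2))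
    hlin (fun y hy => hmax y (Ioo_subset_Icc_self hy))
  exact ⟨hxI, by linarith [h.1], by linarith [h.2]⟩

end DerivI

/-! ### The resolvent -/

theorem IsResolvent.le_of_le {L ε K : ℝ} {u F : ℝ → ℝ} (hL : 0 < L)
    (h : IsResolvent L ε u F) (hu : ∀ x ∈ Icc (-L) L, u x ≤ K) :
    ∀ x ∈ Icc (-L) L, F x ≤ K := by
  have key : ∀ δ : ℝ, 0 < δ → ∀ x ∈ Icc (-L) L, F x ≤ K + δ * (2 * ε ^ 2 + L ^ 2) := by
    intro δ hδ x hx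
    obtain ⟨z, hz, hmax⟩ := isCompact_Icc.exists_isMaxOn
      (nonempty_Icc.2 (by linarith : -L ≤ L))
      (f := fun y => F y - δ * y ^ 2) (h.reg.continuousOn.sub (by fun_prop))
    have hm : ∀ y ∈ Icc (-L) L, F y - δ * y ^ 2 ≤ F z - δ * z ^ 2 := hmax
    obtain ⟨-, -, h2⟩ := neumann_max_interior hL h.reg h.bc_left h.bc_right hδ hz hm
    have h3 := h.eqn z hz
    have h4 := hm x hx
    have h5 := hu z hz
    have h6 : x ^ 2 ≤ L ^ 2 := sq_le_sq' hx.1 hx.2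
    nlinarith [sq_nonneg z, sq_nonneg ε]
  intro x hx
  refine le_of_forall_pos_le_add fun η hη => ?_
  have hc : 0 < 2 * ε ^ 2 + L ^ 2 := by positivity
  have := key (η / (2 * ε ^ 2 + L ^ 2)) (by positivity) x hx
  rwa [div_mul_cancel₀ _ hc.ne'] at this

theorem derivI_neg {L : ℝ} {u : ℝ → ℝ} : derivI L (fun x => -u x) = fun x => -derivI L u x := by
  funext x
  exact derivWithin.fun_neg

theorem IsResolvent.neg {L ε : ℝ} {u F : ℝ → ℝ} (h : IsResolvent L ε u F) :
    IsResolvent L ε (fun x => -u x) (fun x => -F x) where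
  reg := h.reg.neg
  eqn x hx := by
    rw [derivI_neg, derivI_neg, ← h.eqn x hx]
    ring
  bc_left := by simp [derivI_neg, h.bc_left]
  bc_right := by simp [derivI_neg, h.bc_right]

theorem IsResolvent.abs_le_of_abs_le {L ε K : ℝ} {u F : ℝ → ℝ} (hL : 0 < L)
    (h : IsResolvent L ε u F) (hu : ∀ x ∈ Icc (-L) L, |u x| ≤ K) :
    ∀ x ∈ Icc (-L) L, |F x| ≤ K := fun x hx => by
  refine abs_le.2 ⟨?_, h.le_of_le hL (fun y hy => (abs_le.1 (hu y hy)).2) x hx⟩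
  have := h.neg.le_of_le hL (K := K) (fun y hy => by linarith [(abs_le.1 (hu y hy)).1]) x hx
  linarith

theorem IsResolvent.abs_deriv_deriv_le {L ε K : ℝ} {u F : ℝ → ℝ} (hL : 0 < L) (hε : 0 < ε)
    (h : IsResolvent L ε u F) (hu : ∀ x ∈ Icc (-L) L, |u x| ≤ K) :
    ∀ x ∈ Icc (-L) L, |derivI L (derivI L F) x| ≤ 2 * K / ε ^ 2 := fun x hx => by
  rw [le_div_iff₀ (by positivity), ← abs_of_pos (by positivity : 0 < ε ^ 2), ← abs_mul]
  have h1 := abs_le.1 (h.abs_le_of_abs_le hL hu x hx)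
  have h2 := abs_le.1 (hu x hx)
  have h3 := h.eqn x hx
  exact abs_le.2 ⟨by linarith [h1.1, h2.2], by linarith [h1.2, h2.1]⟩

theorem IsResolvent.abs_deriv_le {L ε K : ℝ} {u F : ℝ → ℝ} (hL : 0 < L) (hε : 0 < ε)
    (h : IsResolvent L ε u F) (hu : ∀ x ∈ Icc (-L) L, |u x| ≤ K) :
    ∀ x ∈ Icc (-L) L, |derivI L F x| ≤ 2 * K / ε ^ 2 * (2 * L) := fun x hx => by
  have hl : -L ∈ Icc (-L) L := ⟨le_rfl, by linarith⟩
  have h1 := (convex_Icc (-L) L).norm_image_sub_le_of_norm_hasDerivWithin_le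
    (fun y hy => hasDerivWithinAt_derivI (contDiffOn_derivI hL h.reg) hy)
    (fun y hy => (Real.norm_eq_abs _).trans_le (h.abs_deriv_deriv_le hL hε hu y hy)) hl hx
  rw [h.bc_left, sub_zero, Real.norm_eq_abs, Real.norm_eq_abs] at h1
  have h2 : 0 ≤ 2 * K / ε ^ 2 := (abs_nonneg _).trans (h.abs_deriv_deriv_le hL hε hu x hx)
  refine h1.trans (mul_le_mul_of_nonneg_left ?_ h2)
  exact abs_le.2 ⟨by linarith [hx.1], by linarith [hx.2]⟩

/-! ### A comparison principle with Neumann boundary conditions -/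

theorem le_mul_time_of_neumann {L t₀ T M : ℝ} (hL : 0 < L) {u u' : ℝ → ℝ → ℝ}
    (hc : ContinuousOn (Function.uncurry u) (Icc t₀ T ×ˢ Icc (-L) L))
    (h0 : ∀ x ∈ Icc (-L) L, u t₀ x ≤ 0)
    (hreg : ∀ t ∈ Ioc t₀ T, ContDiffOn ℝ 2 (u t) (Icc (-L) L))
    (hl : ∀ t ∈ Ioc t₀ T, derivI L (u t) (-L) = 0) (hr : ∀ t ∈ Ioc t₀ T, derivI L (u t) L = 0)
    (hd : ∀ t ∈ Ioc t₀ T, ∀ x ∈ Ioo (-L) L, HasDerivAt (fun s => u s x) (u' t x) t)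
    (hM : ∀ t ∈ Ioc t₀ T, ∀ x ∈ Ioo (-L) L, ∀ δ ∈ Ioc (0 : ℝ) 1,
      derivI L (u t) x = 2 * δ * x → derivI L (derivI L (u t)) x ≤ 2 * δ → u' t x < M) :
    ∀ t ∈ Icc t₀ T, ∀ x ∈ Icc (-L) L, u t x ≤ M * (t - t₀) := by
  have key : ∀ δ ∈ Ioc (0 : ℝ) 1, ∀ t ∈ Icc t₀ T, ∀ x ∈ Icc (-L) L,
      u t x ≤ M * (t - t₀) + δ * L ^ 2 := by
    intro δ hδ t ht x hx
    obtain ⟨⟨s, z⟩, ⟨hs, hz⟩, hmax⟩ := (isCompact_Icc.prod isCompact_Icc).exists_isMaxOn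
      (f := fun p : ℝ × ℝ => Function.uncurry u p - δ * p.2 ^ 2 - M * (p.1 - t₀))
      ⟨(t, x), ht, hx⟩ ((hc.sub (by fun_prop)).sub (by fun_prop))
    have hm : ∀ r ∈ Icc t₀ T, ∀ y ∈ Icc (-L) L,
        u r y - δ * y ^ 2 - M * (r - t₀) ≤ u s z - δ * z ^ 2 - M * (s - t₀) :=
      fun r hr y hy => hmax (show ((r, y) : ℝ × ℝ) ∈ _ from ⟨hr, hy⟩)
    have hst : s = t₀ := by
      by_contra hne
      have hs' : s ∈ Ioc t₀ T := ⟨lt_of_le_of_ne hs.1 (Ne.symm hne), hs.2⟩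
      obtain ⟨hzI, h1, h2⟩ := neumann_max_interior hL (hreg s hs') (hl s hs') (hr s hs') hδ.1 hz
        (fun y hy => by linarith [hm s hs y hy])
      have h3 := hM s hs' z hzI δ hδ h1 h2
      have h4 : HasDerivAt (fun r => u r z - M * (r - t₀)) (u' s z - M) s := by
        simpa using (hd s hs' z hzI).fun_sub (((hasDerivAt_id s).sub_const t₀).const_mul M)
      have h5 := hasDerivWithinAt_nonneg_of_right_max hs'.1 h4.hasDerivWithinAt
        (fun r hr => by linarith [hm r ⟨hr.1, hr.2.trans hs.2⟩ z hz])
      linarith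
    have h6 := hm t ht x hx
    rw [hst] at h6
    have h7 := h0 z hz
    have h8 : x ^ 2 ≤ L ^ 2 := sq_le_sq' hx.1 hx.2
    nlinarith [sq_nonneg z, hδ.1]
  intro t ht x hx
  refine le_of_forall_pos_le_add fun η hη => ?_
  have hLs : 0 < L ^ 2 := by positivity
  have h1 := key (min 1 (η / L ^ 2)) ⟨by positivity, min_le_left _ _⟩ t ht x hx
  have h2 : min 1 (η / L ^ 2) * L ^ 2 ≤ η :=
    (mul_le_mul_of_nonneg_right (min_le_right _ _) hLs.le).trans_eq (div_mul_cancel₀ _ hLs.ne')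
  linarith

/-! ### Lipschitz continuity in time to the right of a positive time -/

theorem hasDerivAt_mul_derivI {L : ℝ} {u w : ℝ → ℝ} (hL : 0 < L)
    (hu : ContDiffOn ℝ 1 u (Icc (-L) L)) (hw : ContDiffOn ℝ 2 w (Icc (-L) L)) {x : ℝ}
    (hx : x ∈ Ioo (-L) L) : HasDerivAt (fun y => u y * derivI L w y)
      (derivI L u x * derivI L w x + u x * derivI L (derivI L w) x) x :=
  (hasDerivAt_derivI hu hx).fun_mul (hasDerivAt_derivI (contDiffOn_derivI hL hw) hx)

theorem derivI_flux_eq {L ε a b : ℝ} {u V : ℝ → ℝ} (hL : 0 < L)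
    (hu : ContDiffOn ℝ 2 u (Icc (-L) L)) (hV : ContDiffOn ℝ 2 V (Icc (-L) L)) {x : ℝ}
    (hx : x ∈ Ioo (-L) L) :
    a * derivI L (fun y => u y * derivI L u y) x
      + b * derivI L (fun y => (u y - ε) * derivI L V y) x
    = a * (derivI L u x * derivI L u x + u x * derivI L (derivI L u) x)
      + b * (derivI L u x * derivI L V x + (u x - ε) * derivI L (derivI L V) x) := by
  have hu1 : ContDiffOn ℝ 1 u (Icc (-L) L) := hu.of_le (by norm_num)
  rw [derivI_eq_of_hasDerivAt hx (hasDerivAt_mul_derivI hL hu1 hu hx),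
    derivI_eq_of_hasDerivAt hx (((hasDerivAt_derivI hu1 hx).sub_const ε).fun_mul
      (hasDerivAt_derivI (contDiffOn_derivI hL hV) hx))]

theorem flux_bound {a b ε σ p q r y z K Q Z B₁ B₂ : ℝ} (ha : 0 ≤ a) (hb : 0 ≤ b) (hε : 0 ≤ ε)
    (hσ : |σ| = 1) (hp : 0 ≤ p) (hpK : p ≤ K) (hq : |q| ≤ Q) (hr : σ * r ≤ Z) (hZ : 0 ≤ Z)
    (hy : |y| ≤ B₁) (hz : |z| ≤ B₂) :
    σ * (a * (q * q + p * r) + b * (q * y + (p - ε) * z))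
      ≤ a * (Q * Q + K * Z) + b * (Q * B₁ + (K + ε) * B₂) := by
  have hQ : 0 ≤ Q := (abs_nonneg _).trans hq
  have h1 : σ * (q * q) ≤ Q * Q := by
    refine (le_abs_self _).trans ?_
    rw [abs_mul, hσ, one_mul, abs_mul]
    gcongr
  have h2 : p * (σ * r) ≤ K * Z := by
    refine (mul_le_mul_of_nonneg_left hr hp).trans ?_
    gcongr
  have h3 : σ * (q * y) ≤ Q * B₁ := by
    refine (le_abs_self _).trans ?_
    rw [abs_mul, hσ, one_mul, abs_mul]
    gcongr
  have h4 : σ * ((p - ε) * z) ≤ (K + ε) * B₂ := by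
    refine (le_abs_self _).trans ?_
    rw [abs_mul, hσ, one_mul, abs_mul]
    have : |p - ε| ≤ K + ε := abs_le.2 ⟨by linarith, by linarith⟩
    gcongr
    linarith
  calc σ * (a * (q * q + p * r) + b * (q * y + (p - ε) * z))
      = a * (σ * (q * q) + p * (σ * r)) + b * (σ * (q * y) + σ * ((p - ε) * z)) := by ring
    _ ≤ _ := by gcongr

theorem derivI_const_mul_sub {L : ℝ} (σ : ℝ) {u w : ℝ → ℝ}
    (hL : 0 < L) (hu : ContDiffOn ℝ 1 u (Icc (-L) L)) (hw : ContDiffOn ℝ 1 w (Icc (-L) L))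
    {x : ℝ} (hx : x ∈ Icc (-L) L) :
    derivI L (fun y => σ * (u y - w y)) x = σ * (derivI L u x - derivI L w x) :=
  (((hasDerivWithinAt_derivI hu hx).sub (hasDerivWithinAt_derivI hw hx)).const_mul σ).derivWithin
    (uniqueDiffOn_Icc (by linarith) x hx)

theorem derivI_derivI_const_mul_sub {L : ℝ} (σ : ℝ) {u w : ℝ → ℝ}
    (hL : 0 < L) (hu : ContDiffOn ℝ 2 u (Icc (-L) L)) (hw : ContDiffOn ℝ 2 w (Icc (-L) L))
    {x : ℝ} (hx : x ∈ Icc (-L) L) :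
    derivI L (derivI L (fun y => σ * (u y - w y))) x
      = σ * (derivI L (derivI L u) x - derivI L (derivI L w) x) := by
  rw [← derivI_const_mul_sub σ hL (contDiffOn_derivI hL hu) (contDiffOn_derivI hL hw) hx]
  exact derivWithin_congr (fun y hy => derivI_const_mul_sub σ hL (hu.of_le (by norm_num))
    (hw.of_le (by norm_num)) hy) (derivI_const_mul_sub σ hL (hu.of_le (by norm_num))
    (hw.of_le (by norm_num)) hx)

theorem exists_abs_le_of_continuousOn {X : Type*} [TopologicalSpace X] {s : Set X} {p : X → ℝ}
    (hs : IsCompact s) (hp : ContinuousOn p s) : ∃ C, 0 ≤ C ∧ ∀ x ∈ s, |p x| ≤ C := by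
  obtain ⟨C, hC⟩ := hs.exists_bound_of_continuousOn hp
  exact ⟨max C 0, le_max_right _ _, fun x hx => (hC x hx).trans (le_max_left _ _)⟩

theorem exists_abs_sub_le_mul_time {a b L ε t₀ T : ℝ} {u v V : ℝ → ℝ → ℝ}
    (ha : 0 < a) (hb : 0 < b) (hL : 0 < L) (hε : 0 < ε) (ht₀ : 0 < t₀)
    (hu : ContinuousOn (Function.uncurry u) (Ici (0 : ℝ) ×ˢ Icc (-L) L))
    (hv : ContinuousOn (Function.uncurry v) (Ici (0 : ℝ) ×ˢ Icc (-L) L))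
    (hreg : ∀ t : ℝ, 0 < t → ContDiffOn ℝ 2 (u t) (Icc (-L) L))
    (hbc : ∀ t : ℝ, 0 < t → derivI L (u t) (-L) = 0 ∧ derivI L (u t) L = 0)
    (hV : ∀ t : ℝ, 0 < t → IsResolvent L ε (v t) (V t))
    (hnn : ∀ t : ℝ, 0 ≤ t → ∀ x ∈ Icc (-L) L, 0 ≤ u t x)
    (hpde : ∀ t : ℝ, 0 < t → ∀ x ∈ Ioo (-L) L, HasDerivAt (fun s => u s x)
      (a * derivI L (fun y => u t y * derivI L (u t) y) x
        + b * derivI L (fun y => (u t y - ε) * derivI L (V t) y) x) t) :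
    ∃ M : ℝ, ∀ t ∈ Icc t₀ T, ∀ x ∈ Icc (-L) L, |u t x - u t₀ x| ≤ M * (t - t₀) := by
  have hsub : Icc t₀ T ×ˢ Icc (-L) L ⊆ Ici (0 : ℝ) ×ˢ Icc (-L) L :=
    prod_mono (fun t ht => ht₀.le.trans ht.1) subset_rfl
  have hcpt : IsCompact (Icc t₀ T ×ˢ Icc (-L) L) := isCompact_Icc.prod isCompact_Icc
  obtain ⟨K, hK0, hK⟩ := exists_abs_le_of_continuousOn hcpt (hu.mono hsub)
  obtain ⟨Kv, hKv0, hKv⟩ := exists_abs_le_of_continuousOn hcpt (hv.mono hsub)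
  have hreg₀ := hreg t₀ ht₀
  have hreg₁ : ∀ t : ℝ, 0 < t → ContDiffOn ℝ 1 (u t) (Icc (-L) L) :=
    fun t ht => (hreg t ht).of_le (by norm_num)
  obtain ⟨C₁, hC₁0, hC₁⟩ := exists_abs_le_of_continuousOn isCompact_Icc
    (continuousOn_derivI hL (hreg₁ t₀ ht₀))
  obtain ⟨C₂, hC₂0, hC₂⟩ := exists_abs_le_of_continuousOn isCompact_Icc
    (continuousOn_derivI hL (contDiffOn_derivI hL hreg₀))
  set B₂ := 2 * Kv / ε ^ 2
  set B₁ := B₂ * (2 * L)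
  set M := a * ((C₁ + 2 * L) * (C₁ + 2 * L) + K * (C₂ + 2))
    + b * ((C₁ + 2 * L) * B₁ + (K + ε) * B₂) + 1 with hM
  have key : ∀ σ : ℝ, |σ| = 1 → ∀ t ∈ Icc t₀ T, ∀ x ∈ Icc (-L) L,
      σ * (u t x - u t₀ x) ≤ M * (t - t₀) := by
    intro σ hσ
    have hσσ : σ * σ = 1 := by rw [← abs_mul_abs_self, hσ, one_mul]
    have hends : ∀ t, 0 < t → ∀ x ∈ Icc (-L) L,
        derivI L (u t) x = 0 → derivI L (u t₀) x = 0 →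
        derivI L (fun y => σ * (u t y - u t₀ y)) x = 0 := fun t ht x hx h1 h2 => by
      rw [derivI_const_mul_sub σ hL (hreg₁ t ht) (hreg₁ t₀ ht₀) hx, h1, h2]
      ring
    refine le_mul_time_of_neumann (u := fun t x => σ * (u t x - u t₀ x)) (u' := fun t x => σ *
        (a * derivI L (fun y => u t y * derivI L (u t) y) x
          + b * derivI L (fun y => (u t y - ε) * derivI L (V t) y) x)) hL ?_ ?_ ?_ ?_ ?_ ?_ ?_
    · refine continuousOn_const.mul ((hu.mono hsub).sub ?_)
      exact hreg₀.continuousOn.comp continuousOn_snd fun p hp => hp.2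
    · intro x hx
      simp
    · intro t ht
      exact contDiffOn_const.mul ((hreg t (ht₀.trans ht.1)).sub hreg₀)
    · intro t ht
      exact hends t (ht₀.trans ht.1) _ ⟨le_rfl, by linarith⟩ (hbc t (ht₀.trans ht.1)).1
        (hbc t₀ ht₀).1
    · intro t ht
      exact hends t (ht₀.trans ht.1) _ ⟨by linarith, le_rfl⟩ (hbc t (ht₀.trans ht.1)).2
        (hbc t₀ ht₀).2
    · intro t ht x hx
      exact ((hpde t (ht₀.trans ht.1) x hx).sub_const _).const_mul σ
    · intro t ht x hx δ hδ h1 h2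
      have htp := ht₀.trans ht.1
      have hxc := Ioo_subset_Icc_self hx
      rw [derivI_const_mul_sub σ hL (hreg₁ t htp) (hreg₁ t₀ ht₀) hxc] at h1
      rw [derivI_derivI_const_mul_sub σ hL (hreg t htp) hreg₀ hxc] at h2
      have htx : ((t, x) : ℝ × ℝ) ∈ Icc t₀ T ×ˢ Icc (-L) L := ⟨Ioc_subset_Icc_self ht, hxc⟩
      have hq : |derivI L (u t) x| ≤ C₁ + 2 * L := by
        have h3 : derivI L (u t) x = derivI L (u t₀) x + σ * (2 * δ * x) := by
          rw [← h1, ← mul_assoc, hσσ]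
          ring
        have h4 : |σ * (2 * δ * x)| ≤ 2 * L := by
          rw [abs_mul, hσ, one_mul, abs_mul, abs_of_pos (by linarith [hδ.1])]
          have : |x| ≤ L := abs_le.2 hxc
          nlinarith [hδ.1, hδ.2, abs_nonneg x]
        rw [h3]
        exact (abs_add_le _ _).trans (add_le_add (hC₁ x hxc) h4)
      have hr : σ * derivI L (derivI L (u t)) x ≤ C₂ + 2 := by
        have h5 : σ * derivI L (derivI L (u t₀)) x ≤ C₂ := by
          refine (le_abs_self _).trans ?_
          rw [abs_mul, hσ, one_mul]
          exact hC₂ x hxc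
        linarith [hδ.2]
      have hvK : ∀ y ∈ Icc (-L) L, |v t y| ≤ Kv :=
        fun y hy => hKv (t, y) ⟨Ioc_subset_Icc_self ht, hy⟩
      rw [derivI_flux_eq hL (hreg t htp) (hV t htp).reg hx, hM]
      refine lt_of_le_of_lt (flux_bound ha.le hb.le hε.le hσ (hnn t htp.le x hxc)
        ((le_abs_self _).trans (hK (t, x) htx)) hq hr (by linarith)
        ((hV t htp).abs_deriv_le hL hε hvK x hxc)
        ((hV t htp).abs_deriv_deriv_le hL hε hvK x hxc)) (lt_add_one _)
  refine ⟨M, fun t ht x hx => abs_le.2 ⟨?_, ?_⟩⟩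
  · linarith [key (-1) (by norm_num) t ht x hx]
  · linarith [key 1 (by norm_num) t ht x hx]

/-! ### Entropy production -/

theorem integrableOn_Ioo_of_continuousOn {L : ℝ} {p : ℝ → ℝ} (hp : ContinuousOn p (Icc (-L) L)) :
    IntegrableOn p (Ioo (-L) L) :=
  hp.integrableOn_Icc.mono_set Ioo_subset_Icc_self

theorem integral_mul_deriv_eq_neg {L : ℝ} {p p' q q' : ℝ → ℝ} (hL : 0 < L)
    (hp : ContinuousOn p (Icc (-L) L)) (hp' : ContinuousOn p' (Icc (-L) L))
    (hq : ContinuousOn q (Icc (-L) L)) (hq' : ContinuousOn q' (Icc (-L) L))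
    (hpd : ∀ x ∈ Ioo (-L) L, HasDerivAt p (p' x) x)
    (hqd : ∀ x ∈ Ioo (-L) L, HasDerivAt q (q' x) x) (hl : q (-L) = 0) (hr : q L = 0) :
    ∫ x in Ioo (-L) L, p x * q' x = -∫ x in Ioo (-L) L, p' x * q x := by
  have hle : -L ≤ L := by linarith
  have h := intervalIntegral.integral_mul_deriv_eq_deriv_mul_of_hasDerivAt
    (u := p) (v := q) (a := -L) (b := L) (u' := p') (v' := q')
    (by rwa [uIcc_of_le hle]) (by rwa [uIcc_of_le hle])
    (by rwa [min_eq_left hle, max_eq_right hle]) (by rwa [min_eq_left hle, max_eq_right hle])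
    (hp'.intervalIntegrable_of_Icc hle) (hq'.intervalIntegrable_of_Icc hle)
  rw [hl, hr, mul_zero, mul_zero, sub_zero, zero_sub] at h
  simpa only [intervalIntegral.integral_of_le hle, integral_Ioc_eq_integral_Ioo] using h

theorem IsResolvent.integral_deriv_sq_le {L ε : ℝ} {v V : ℝ → ℝ} (hL : 0 < L)
    (h : IsResolvent L ε v V) (hv : ContDiffOn ℝ 1 v (Icc (-L) L)) :
    ∫ x in Ioo (-L) L, derivI L V x ^ 2 ≤ ∫ x in Ioo (-L) L, derivI L v x ^ 2 := by
  have hV1 : ContDiffOn ℝ 1 V (Icc (-L) L) := h.reg.of_le (by norm_num)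
  have hVx1 := contDiffOn_derivI hL h.reg
  have cV := hV1.continuousOn
  have cVx := continuousOn_derivI hL hV1
  have cVxx := continuousOn_derivI hL hVx1
  have cv := hv.continuousOn
  have cvx := continuousOn_derivI hL hv
  have e1 := integral_mul_deriv_eq_neg hL cV cVx cVx cVxx (fun x hx => hasDerivAt_derivI hV1 hx)
    (fun x hx => hasDerivAt_derivI hVx1 hx) h.bc_left h.bc_right
  have e2 := integral_mul_deriv_eq_neg hL cv cvx cVx cVxx (fun x hx => hasDerivAt_derivI hv hx)
    (fun x hx => hasDerivAt_derivI hVx1 hx) h.bc_left h.bc_right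
  have e3 : ∫ x in Ioo (-L) L, v x * derivI L (derivI L V) x
      ≤ ∫ x in Ioo (-L) L, V x * derivI L (derivI L V) x := by
    refine setIntegral_mono_on (integrableOn_Ioo_of_continuousOn (cv.mul cVxx))
      (integrableOn_Ioo_of_continuousOn (cV.mul cVxx)) measurableSet_Ioo fun x hx => ?_
    rw [← h.eqn x (Ioo_subset_Icc_self hx)]
    nlinarith [mul_nonneg (sq_nonneg ε) (sq_nonneg (derivI L (derivI L V) x))]
  have e4 : ∫ x in Ioo (-L) L, derivI L v x * derivI L V x
      ≤ ∫ x in Ioo (-L) L, (1 / 2 * derivI L v x ^ 2 + 1 / 2 * derivI L V x ^ 2) := by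
    refine setIntegral_mono_on (integrableOn_Ioo_of_continuousOn (cvx.mul cVx))
      (integrableOn_Ioo_of_continuousOn (by fun_prop)) measurableSet_Ioo fun x hx => ?_
    nlinarith [sq_nonneg (derivI L v x - derivI L V x)]
  rw [integral_add (integrableOn_Ioo_of_continuousOn (by fun_prop))
    (integrableOn_Ioo_of_continuousOn (by fun_prop)), integral_const_mul, integral_const_mul] at e4
  have e5 : ∫ x in Ioo (-L) L, derivI L V x * derivI L V x
      = ∫ x in Ioo (-L) L, derivI L V x ^ 2 := by simp only [sq]
  linarith

theorem le_of_forall_Ioo_le {L ε : ℝ} {u : ℝ → ℝ} (hL : 0 < L)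
    (hu : ContinuousOn u (Icc (-L) L)) (h : ∀ x ∈ Ioo (-L) L, ε ≤ u x) :
    ∀ x ∈ Icc (-L) L, ε ≤ u x := by
  have hc := hu.preimage_isClosed_of_isClosed isClosed_Icc (isClosed_Ici (a := ε))
  have hs : Ioo (-L) L ⊆ Icc (-L) L ∩ u ⁻¹' Ici ε :=
    fun x hx => ⟨Ioo_subset_Icc_self hx, h x hx⟩
  have := closure_minimal hs hc
  rw [closure_Ioo (by linarith)] at this
  exact fun x hx => (this hx).2

theorem entropy_production_le {L ε a b α : ℝ} {u u' v V : ℝ → ℝ} (hL : 0 < L) (hε : 0 < ε)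
    (hb : 0 < b) (hα : 0 < α) (hu : ContDiffOn ℝ 2 u (Icc (-L) L))
    (hv : ContDiffOn ℝ 2 v (Icc (-L) L)) (hV : IsResolvent L ε v V)
    (hl : derivI L u (-L) = 0) (hr : derivI L u L = 0) (hlo : ∀ x ∈ Ioo (-L) L, ε ≤ u x)
    (hu' : ∀ x ∈ Ioo (-L) L, u' x = a * derivI L (fun y => u y * derivI L u y) x
      + b * derivI L (fun y => (u y - ε) * derivI L V y) x) :
    ∫ x in Ioo (-L) L, (Real.log (u x) + 1) * u' x
      ≤ -(a - b * α / 2) * (∫ x in Ioo (-L) L, derivI L u x ^ 2)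
        + b / (2 * α) * ∫ x in Ioo (-L) L, derivI L v x ^ 2 := by
  have hu1 : ContDiffOn ℝ 1 u (Icc (-L) L) := hu.of_le (by norm_num)
  have hV1 : ContDiffOn ℝ 1 V (Icc (-L) L) := hV.reg.of_le (by norm_num)
  have cu := hu1.continuousOn
  have cux := continuousOn_derivI hL hu1
  have cuxx := continuousOn_derivI hL (contDiffOn_derivI hL hu)
  have cVx := continuousOn_derivI hL hV1
  have cVxx := continuousOn_derivI hL (contDiffOn_derivI hL hV.reg)
  have hlo' := le_of_forall_Ioo_le hL cu hlo
  have hne : ∀ x ∈ Icc (-L) L, u x ≠ 0 := fun x hx => (hε.trans_le (hlo' x hx)).ne'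
  have hparts := integral_mul_deriv_eq_neg (p := fun x => Real.log (u x) + 1)
    (p' := fun x => derivI L u x / u x)
    (q := fun x => a * (u x * derivI L u x) + b * ((u x - ε) * derivI L V x))
    (q' := fun x => a * (derivI L u x * derivI L u x + u x * derivI L (derivI L u) x)
      + b * (derivI L u x * derivI L V x + (u x - ε) * derivI L (derivI L V) x)) hL
    ((cu.log hne).add continuousOn_const) (cux.div cu hne) (by fun_prop) (by fun_prop)
    (fun x hx => ((hasDerivAt_derivI hu1 hx).log (hne x (Ioo_subset_Icc_self hx))).add_const 1)
    (fun x hx => ((hasDerivAt_mul_derivI hL hu1 hu hx).const_mul a).fun_add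
      ((((hasDerivAt_derivI hu1 hx).sub_const ε).fun_mul
        (hasDerivAt_derivI (contDiffOn_derivI hL hV.reg) hx)).const_mul b))
    (by simp [hl, hV.bc_left]) (by simp [hr, hV.bc_right])
  have hcongr : ∫ x in Ioo (-L) L, (Real.log (u x) + 1) * u' x
      = ∫ x in Ioo (-L) L, (Real.log (u x) + 1) *
        (a * (derivI L u x * derivI L u x + u x * derivI L (derivI L u) x)
      + b * (derivI L u x * derivI L V x + (u x - ε) * derivI L (derivI L V) x)) :=
    setIntegral_congr_fun measurableSet_Ioo fun x hx => by
      simp only [hu' x hx, derivI_flux_eq hL hu hV.reg hx]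
  rw [hcongr, hparts, ← integral_neg]
  have hbound : ∫ x in Ioo (-L) L, -(derivI L u x / u x *
        (a * (u x * derivI L u x) + b * ((u x - ε) * derivI L V x)))
      ≤ ∫ x in Ioo (-L) L, (-(a - b * α / 2) * derivI L u x ^ 2
        + b / (2 * α) * derivI L V x ^ 2) := by
    refine setIntegral_mono_on (integrableOn_Ioo_of_continuousOn
      (((cux.div cu hne).mul (by fun_prop)).neg))
      (integrableOn_Ioo_of_continuousOn (by fun_prop)) measurableSet_Ioo fun x hx => ?_
    have hux := hlo x hx
    have hup : 0 < u x := hε.trans_le hux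
    set q := derivI L u x
    set z := derivI L V x
    have h1 : q / u x * (a * (u x * q) + b * ((u x - ε) * z))
        = a * q ^ 2 + b * ((u x - ε) / u x * (q * z)) := by
      field_simp
    have h2 : |(u x - ε) / u x * (q * z)| ≤ |q| * |z| := by
      rw [abs_mul, abs_mul, abs_of_nonneg (div_nonneg (by linarith) hup.le)]
      exact mul_le_of_le_one_left (by positivity) ((div_le_one hup).2 (by linarith))
    have h3 : |q| * |z| ≤ α / 2 * q ^ 2 + 1 / (2 * α) * z ^ 2 := by
      have h4 : α / 2 * q ^ 2 + 1 / (2 * α) * z ^ 2 - |q| * |z|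
          = (α * |q| - |z|) ^ 2 / (2 * α) := by
        field_simp
        rw [← sq_abs q, ← sq_abs z]
        ring
      have : 0 ≤ (α * |q| - |z|) ^ 2 / (2 * α) := by positivity
      linarith
    have h5 := (neg_abs_le ((u x - ε) / u x * (q * z)))
    have h6 : -(α / 2 * q ^ 2 + 1 / (2 * α) * z ^ 2) ≤ (u x - ε) / u x * (q * z) := by linarith
    have h7 := mul_le_mul_of_nonneg_left h6 hb.le
    rw [h1]
    have h8 : b / (2 * α) * z ^ 2 = b * (1 / (2 * α) * z ^ 2) := by ring
    rw [h8]
    linarith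
  refine hbound.trans ?_
  rw [integral_add (integrableOn_Ioo_of_continuousOn (by fun_prop))
    (integrableOn_Ioo_of_continuousOn (by fun_prop)), integral_const_mul, integral_const_mul]
  have := mul_le_mul_of_nonneg_left (hV.integral_deriv_sq_le hL (hv.of_le (by norm_num)))
    (by positivity : 0 ≤ b / (2 * α))
  linarith

/-! ### Time derivative of the entropy -/

theorem hasDerivWithinAt_integral_mul_log {L ε t₀ T M K : ℝ} {u : ℝ → ℝ → ℝ} {u' : ℝ → ℝ}
    (hε : 0 < ε) (hT : t₀ < T) (hc : ∀ t ∈ Icc t₀ T, ContinuousOn (u t) (Icc (-L) L))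
    (hlo : ∀ t ∈ Icc t₀ T, ∀ x ∈ Ioo (-L) L, ε ≤ u t x)
    (hhi : ∀ t ∈ Icc t₀ T, ∀ x ∈ Ioo (-L) L, u t x ≤ K)
    (hlip : ∀ t ∈ Icc t₀ T, ∀ x ∈ Icc (-L) L, |u t x - u t₀ x| ≤ M * (t - t₀))
    (hd : ∀ x ∈ Ioo (-L) L, HasDerivAt (fun s => u s x) (u' x) t₀) :
    HasDerivWithinAt (fun t => ∫ x in Ioo (-L) L, u t x * Real.log (u t x))
      (∫ x in Ioo (-L) L, (Real.log (u t₀ x) + 1) * u' x) (Ioi t₀) t₀ := by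
  obtain ⟨C, hC0, hC⟩ := exists_abs_le_of_continuousOn (isCompact_Icc (a := ε) (b := K))
    (p := fun s => Real.log s + 1) ((continuousOn_id.log
      fun s hs => (hε.trans_le hs.1).ne').add continuousOn_const)
  have hint : ∀ t ∈ Icc t₀ T, IntegrableOn (fun x => u t x * Real.log (u t x)) (Ioo (-L) L) :=
    fun t ht => integrableOn_Ioo_of_continuousOn
      (Real.continuous_mul_log.comp_continuousOn (hc t ht))
  have ht₀ : t₀ ∈ Icc t₀ T := ⟨le_rfl, hT.le⟩
  have hev : ∀ᶠ t in nhdsWithin t₀ (Ioi t₀), t ∈ Ioc t₀ T := Ioc_mem_nhdsGT hT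
  rw [hasDerivWithinAt_iff_tendsto_slope' self_notMem_Ioi]
  have hslope : ∀ t ∈ Icc t₀ T,
      slope (fun t => ∫ x in Ioo (-L) L, u t x * Real.log (u t x)) t₀ t
      = ∫ x in Ioo (-L) L, slope (fun t => u t x * Real.log (u t x)) t₀ t := fun t ht => by
    simp only [slope_def_module, smul_eq_mul]
    rw [integral_const_mul, integral_sub (hint t ht) (hint t₀ ht₀)]
  refine Filter.Tendsto.congr' (Filter.EventuallyEq.symm
    (hev.mono fun t ht => hslope t (Ioc_subset_Icc_self ht))) ?_
  refine tendsto_integral_filter_of_dominated_convergence (fun _ => C * M) ?_ ?_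
    (integrableOn_const (by simp)) ?_
  · filter_upwards [hev] with t ht
    simp only [slope_def_module, smul_eq_mul]
    exact (((hint t (Ioc_subset_Icc_self ht)).sub (hint t₀ ht₀)).const_mul _).aestronglyMeasurable
  · filter_upwards [hev] with t ht
    refine (ae_restrict_iff' measurableSet_Ioo).2 (Filter.Eventually.of_forall fun x hx => ?_)
    have htc := Ioc_subset_Icc_self ht
    have htp : 0 < t - t₀ := sub_pos.2 ht.1
    have h1 := (convex_Icc ε K).norm_image_sub_le_of_norm_hasDerivWithin_le
      (f := fun s => s * Real.log s)
      (fun s hs => (Real.hasDerivAt_mul_log (hε.trans_le hs.1).ne').hasDerivWithinAt)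
      (fun s hs => hC s hs) ⟨hlo t₀ ht₀ x hx, hhi t₀ ht₀ x hx⟩ ⟨hlo t htc x hx, hhi t htc x hx⟩
    have h2 := h1.trans (mul_le_mul_of_nonneg_left
      (hlip t htc x (Ioo_subset_Icc_self hx)) hC0)
    rw [slope_def_field, norm_div, Real.norm_of_nonneg htp.le, div_le_iff₀ htp]
    linarith
  · refine (ae_restrict_iff' measurableSet_Ioo).2 (Filter.Eventually.of_forall fun x hx => ?_)
    rw [← hasDerivWithinAt_iff_tendsto_slope' self_notMem_Ioi]
    have h1 := (Real.hasDerivAt_mul_log (hε.trans_le (hlo t₀ ht₀ x hx)).ne').comp t₀ (hd x hx)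
    exact h1.hasDerivWithinAt

theorem continuousOn_integral_mul_log {L T : ℝ} {u : ℝ → ℝ → ℝ}
    (hu : ContinuousOn (Function.uncurry u) (Icc (0 : ℝ) T ×ˢ Icc (-L) L)) :
    ContinuousOn (fun t => ∫ x in Ioo (-L) L, u t x * Real.log (u t x)) (Icc 0 T) := by
  have hφ := Real.continuous_mul_log.comp_continuousOn hu
  obtain ⟨C, -, hC⟩ := exists_abs_le_of_continuousOn (isCompact_Icc.prod isCompact_Icc) hφ
  refine continuousOn_of_dominated (bound := fun _ => C) ?_ ?_ (integrableOn_const (by simp)) ?_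
  · intro t ht
    exact (integrableOn_Ioo_of_continuousOn (hφ.comp (f := fun x => (t, x)) (by fun_prop)
      fun x hx => ⟨ht, hx⟩)).aestronglyMeasurable
  · intro t ht
    exact (ae_restrict_iff' measurableSet_Ioo).2 (Filter.Eventually.of_forall fun x hx =>
      hC (t, x) ⟨ht, Ioo_subset_Icc_self hx⟩)
  · refine (ae_restrict_iff' measurableSet_Ioo).2 (Filter.Eventually.of_forall fun x hx => ?_)
    exact hφ.comp (f := fun t => (t, x)) (by fun_prop) fun t ht => ⟨ht, Ioo_subset_Icc_self hx⟩

theorem IsClassicalSolution.exists_hasDerivWithinAt_entropy {R Rμ L ε t₀ : ℝ}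
    {f g F G : ℝ → ℝ → ℝ} (hR : 0 < R) (hRμ : 0 < Rμ) (hL : 0 < L) (hε : 0 < ε)
    (hsol : IsClassicalSolution R Rμ L ε f g F G)
    (hf : ∀ t : ℝ, 0 ≤ t → ∀ x ∈ Icc (-L) L, 0 ≤ f t x)
    (hg : ∀ t : ℝ, 0 ≤ t → ∀ x ∈ Icc (-L) L, 0 ≤ g t x)
    (hfε : ∀ t : ℝ, 0 < t → ∀ x ∈ Ioo (-L) L, ε ≤ f t x)
    (hgε : ∀ t : ℝ, 0 < t → ∀ x ∈ Ioo (-L) L, ε ≤ g t x) (ht₀ : 0 < t₀) :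
    ∃ e : ℝ, HasDerivWithinAt (fun t => (∫ x in Ioo (-L) L, f t x * Real.log (f t x))
          + R / Rμ * ∫ x in Ioo (-L) L, g t x * Real.log (g t x)) e (Ioi t₀) t₀ ∧
      e ≤ -∫ x in Ioo (-L) L, ((1 / 2) * (derivI L (f t₀) x) ^ 2
        + R / (1 + 2 * R) * (derivI L (g t₀) x) ^ 2) := by
  have hpde_g : ∀ t : ℝ, 0 < t → ∀ x ∈ Ioo (-L) L, HasDerivAt (fun s => g s x)
      (Rμ * derivI L (fun y => g t y * derivI L (g t) y) x
        + Rμ * derivI L (fun y => (g t y - ε) * derivI L (F t) y) x) t :=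
    fun t ht x hx => (hsol.pde_g t ht x hx).congr_deriv (add_comm _ _)
  have hT : t₀ < t₀ + 1 := by linarith
  have hsub : Icc t₀ (t₀ + 1) ×ˢ Icc (-L) L ⊆ Ici (0 : ℝ) ×ˢ Icc (-L) L :=
    prod_mono (fun t ht => ht₀.le.trans ht.1) subset_rfl
  have hcpt : IsCompact (Icc t₀ (t₀ + 1) ×ˢ Icc (-L) L) := isCompact_Icc.prod isCompact_Icc
  have hpos : ∀ t ∈ Icc t₀ (t₀ + 1), 0 < t := fun t ht => ht₀.trans_le ht.1
  obtain ⟨Kf, -, hKf⟩ := exists_abs_le_of_continuousOn hcpt (hsol.cont_f.mono hsub)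
  obtain ⟨Kg, -, hKg⟩ := exists_abs_le_of_continuousOn hcpt (hsol.cont_g.mono hsub)
  obtain ⟨Mf, hMf⟩ := exists_abs_sub_le_mul_time (T := t₀ + 1) (by positivity : 0 < 1 + R) hR hL hε
    ht₀ hsol.cont_f hsol.cont_g hsol.reg_f hsol.bc_f hsol.res_g hf hsol.pde_f
  obtain ⟨Mg, hMg⟩ := exists_abs_sub_le_mul_time (T := t₀ + 1) hRμ hRμ hL hε
    ht₀ hsol.cont_g hsol.cont_f hsol.reg_g hsol.bc_g hsol.res_f hg hpde_g
  have hdf := hasDerivWithinAt_integral_mul_log hε hT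
    (fun t ht => (hsol.reg_f t (hpos t ht)).continuousOn) (fun t ht => hfε t (hpos t ht))
    (fun t ht x hx => (le_abs_self _).trans (hKf (t, x) ⟨ht, Ioo_subset_Icc_self hx⟩))
    hMf (hsol.pde_f t₀ ht₀)
  have hdg := hasDerivWithinAt_integral_mul_log hε hT
    (fun t ht => (hsol.reg_g t (hpos t ht)).continuousOn) (fun t ht => hgε t (hpos t ht))
    (fun t ht x hx => (le_abs_self _).trans (hKg (t, x) ⟨ht, Ioo_subset_Icc_self hx⟩))
    hMg (hpde_g t₀ ht₀)
  refine ⟨_, hdf.fun_add (hdg.const_mul (R / Rμ)), ?_⟩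
  have hα : 0 < (1 + 2 * R) / (2 * R) := by positivity
  have ef := entropy_production_le hL hε hR hα (hsol.reg_f t₀ ht₀) (hsol.reg_g t₀ ht₀)
    (hsol.res_g t₀ ht₀) (hsol.bc_f t₀ ht₀).1 (hsol.bc_f t₀ ht₀).2 (hfε t₀ ht₀)
    (a := 1 + R) (fun x _ => rfl)
  have eg := entropy_production_le hL hε hRμ (inv_pos.2 hα) (hsol.reg_g t₀ ht₀)
    (hsol.reg_f t₀ ht₀) (hsol.res_f t₀ ht₀) (hsol.bc_g t₀ ht₀).1 (hsol.bc_g t₀ ht₀).2 (hgε t₀ ht₀)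
    (a := Rμ) (fun x _ => rfl)
  have cfx := continuousOn_derivI hL ((hsol.reg_f t₀ ht₀).of_le (by norm_num))
  have cgx := continuousOn_derivI hL ((hsol.reg_g t₀ ht₀).of_le (by norm_num))
  rw [integral_add (integrableOn_Ioo_of_continuousOn (by fun_prop))
    (integrableOn_Ioo_of_continuousOn (by fun_prop)), integral_const_mul, integral_const_mul]
  refine (add_le_add ef (mul_le_mul_of_nonneg_left eg (by positivity))).trans_eq ?_
  field_simp
  ring

/-- **Lemma 3.3**, entropy inequality (3.4): for a nonnegative classical solution of the
regularized system with `f_ε ≥ ε`, `g_ε ≥ ε`,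
`H(f_ε(T), g_ε(T)) + ∫₀ᵀ∫ (½|∂ₓf_ε|² + (R/(1+2R))|∂ₓg_ε|²) dx dt ≤ H(f_ε(0), g_ε(0))`
where `H(f,g) = ∫ (f ln f + (R/Rμ) g ln g) dx`. -/
theorem regularized_entropy_inequality
    (R Rμ L ε : ℝ) (hR : 0 < R) (hRμ : 0 < Rμ) (hL : 0 < L) (hε : 0 < ε) (hε1 : ε < 1)
    (f g F G : ℝ → ℝ → ℝ)
    (hsol : IsClassicalSolution R Rμ L ε f g F G)
    (hf : ∀ t : ℝ, 0 ≤ t → ∀ x ∈ Icc (-L) L, 0 ≤ f t x)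
    (hg : ∀ t : ℝ, 0 ≤ t → ∀ x ∈ Icc (-L) L, 0 ≤ g t x)
    (hfε : ∀ t : ℝ, 0 < t → ∀ x ∈ Ioo (-L) L, ε ≤ f t x)
    (hgε : ∀ t : ℝ, 0 < t → ∀ x ∈ Ioo (-L) L, ε ≤ g t x) :
    ∀ T : ℝ, 0 < T →
      (∫ x in Ioo (-L) L,
          (f T x * Real.log (f T x) + R / Rμ * (g T x * Real.log (g T x))))
        + (∫ t in Ioc (0:ℝ) T, ∫ x in Ioo (-L) L,
            ((1 / 2) * (derivI L (f t) x) ^ 2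
              + R / (1 + 2 * R) * (derivI L (g t) x) ^ 2))
      ≤ ∫ x in Ioo (-L) L,
          (f 0 x * Real.log (f 0 x) + R / Rμ * (g 0 x * Real.log (g 0 x))) := by
  intro T hT
  have hsplit : ∀ t : ℝ, 0 ≤ t → ∫ x in Ioo (-L) L,
        (f t x * Real.log (f t x) + R / Rμ * (g t x * Real.log (g t x)))
      = (∫ x in Ioo (-L) L, f t x * Real.log (f t x))
        + R / Rμ * ∫ x in Ioo (-L) L, g t x * Real.log (g t x) := by
    intro t ht
    have hslice : ∀ {u : ℝ → ℝ → ℝ},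
        ContinuousOn (Function.uncurry u) (Ici (0 : ℝ) ×ˢ Icc (-L) L) →
        IntegrableOn (fun x => u t x * Real.log (u t x)) (Ioo (-L) L) := fun hu =>
      integrableOn_Ioo_of_continuousOn (Real.continuous_mul_log.comp_continuousOn
        (hu.comp (f := fun x => (t, x)) (by fun_prop) fun x hx => ⟨ht, hx⟩))
    rw [integral_add (hslice hsol.cont_f) ((hslice hsol.cont_g).const_mul _), integral_const_mul]
  rw [hsplit T hT.le, hsplit 0 le_rfl]
  set E : ℝ → ℝ := fun t => (∫ x in Ioo (-L) L, f t x * Real.log (f t x))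
    + R / Rμ * ∫ x in Ioo (-L) L, g t x * Real.log (g t x)
  set D : ℝ → ℝ := fun t => ∫ x in Ioo (-L) L, ((1 / 2) * (derivI L (f t) x) ^ 2
    + R / (1 + 2 * R) * (derivI L (g t) x) ^ 2)
  change E T + ∫ t in Ioc (0 : ℝ) T, D t ≤ E 0
  have hsub : Icc (0 : ℝ) T ×ˢ Icc (-L) L ⊆ Ici (0 : ℝ) ×ˢ Icc (-L) L :=
    prod_mono Icc_subset_Ici_self subset_rfl
  have hE : ContinuousOn E (Icc 0 T) :=
    (continuousOn_integral_mul_log (hsol.cont_f.mono hsub)).add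
      (continuousOn_const.mul (continuousOn_integral_mul_log (hsol.cont_g.mono hsub)))
  have hder : ∀ t ∈ Ioo 0 T, ∃ e, HasDerivWithinAt E e (Ioi t) t ∧ e ≤ -D t := fun t ht =>
    hsol.exists_hasDerivWithinAt_entropy hR hRμ hL hε hf hg hfε hgε ht.1
  choose! E' hE' hle using hder
  by_cases hD : IntegrableOn D (Ioc 0 T)
  · have h := intervalIntegral.sub_le_integral_of_hasDeriv_right_of_le hT.le hE hE'
      ((integrableOn_Icc_iff_integrableOn_Ioc).2 hD).neg hle
    simp only [Pi.neg_apply] at h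
    rw [intervalIntegral.integral_neg, intervalIntegral.integral_of_le hT.le] at h
    linarith
  · rw [integral_undef hD]
    have hD0 : ∀ t, 0 ≤ D t := fun t => integral_nonneg fun x => by positivity
    have h := intervalIntegral.sub_le_integral_of_hasDeriv_right_of_le hT.le hE hE'
      (φ := fun _ => 0) (integrableOn_const (by simp))
      (fun t ht => (hle t ht).trans (neg_nonpos.2 (hD0 t)))
    simp only [intervalIntegral.integral_zero] at h
    linarith

end
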